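/- Let A be a finite-dimensional left Leibniz algebra over a field F of characteristic zero and let B and C be subinvariant subalgebras of A. Then the subalgebra D generated by B and C is a subinvariant subalgebra of A. -/

import Mathlib

open Submodule

section LeibnizDefs

variable {F : Type*} {A : Type*} [Field F] [AddCommGroup A] [Module F A]

/-- The span of all products `b*c` with `b ∈ B`, `c ∈ C`. -/
def mulSub (mul : A →ₗ[F] A →ₗ[F] A) (B C : Submodule F A) : Submodule F A :=
  Submodule.span F {z : A | ∃ b ∈ B, ∃ c ∈ C, mul b c = z}

/-- `fSub mul B C = B·C + C·B`, the function `f(B,C)`. -/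
def fSub (mul : A →ₗ[F] A →ₗ[F] A) (B C : Submodule F A) : Submodule F A :=
  mulSub mul B C ⊔ mulSub mul C B

/-- `fIter mul B C n = f^{n+1}(B,C)` (so index `0` is `f^1(B,C) = f(B,C)`). -/
def fIter (mul : A →ₗ[F] A →ₗ[F] A) (B C : Submodule F A) : ℕ → Submodule F A
  | 0 => fSub mul B C
  | n + 1 => fSub mul B (fIter mul B C n)

/-- `lcs mul B n = B^{n+1}`, the lower central series (index `0` is `B^1 = B`). -/
def lcs (mul : A →ₗ[F] A →ₗ[F] A) (B : Submodule F A) : ℕ → Submodule F A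
  | 0 => B
  | n + 1 => mulSub mul B (lcs mul B n)

/-- `ds mul B n = B^{(n+1)}`, the derived series (index `0` is `B^{(1)} = B`). -/
def ds (mul : A →ₗ[F] A →ₗ[F] A) (B : Submodule F A) : ℕ → Submodule F A
  | 0 => B
  | n + 1 => mulSub mul (ds mul B n) (ds mul B n)

/-- `B^ω = ⋂_{i ≥ 1} B^i`. -/
def omegaSub (mul : A →ₗ[F] A →ₗ[F] A) (B : Submodule F A) : Submodule F A :=
  ⨅ n, lcs mul B n

/-- `B` is a subalgebra: a subspace closed under multiplication. -/
def IsSubalg (mul : A →ₗ[F] A →ₗ[F] A) (B : Submodule F A) : Prop :=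
  ∀ x ∈ B, ∀ y ∈ B, mul x y ∈ B

/-- `I` is an ideal of the subalgebra `S`: `I ⊆ S` and `xI + Ix ⊆ I` for all `x ∈ S`. -/
def IsIdealIn (mul : A →ₗ[F] A →ₗ[F] A) (I S : Submodule F A) : Prop :=
  I ≤ S ∧ ∀ x ∈ S, ∀ y ∈ I, mul x y ∈ I ∧ mul y x ∈ I

/-- `B` is subinvariant in `S`: there is a chain of subalgebras
`B = c 0 ⊆ c 1 ⊆ ⋯ ⊆ c t = S` with each term an ideal of the next. -/
def IsSubinvariantIn (mul : A →ₗ[F] A →ₗ[F] A) (B S : Submodule F A) : Prop :=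
  ∃ (t : ℕ) (c : ℕ → Submodule F A), c 0 = B ∧ c t = S ∧
    (∀ i ≤ t, IsSubalg mul (c i)) ∧ ∀ i < t, IsIdealIn mul (c i) (c (i + 1))

/-- `B` is nilpotent: `B^m = 0` for some `m`. -/
def IsNilpotentSub (mul : A →ₗ[F] A →ₗ[F] A) (B : Submodule F A) : Prop :=
  ∃ m, lcs mul B m = ⊥

/-- `B` is solvable: `B^{(m)} = 0` for some `m`. -/
def IsSolvableSub (mul : A →ₗ[F] A →ₗ[F] A) (B : Submodule F A) : Prop :=
  ∃ m, ds mul B m = ⊥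

/-- The centralizer `Z_A(B) = {x : xb = 0 = bx for all b ∈ B}`. -/
def centralizerSet (mul : A →ₗ[F] A →ₗ[F] A) (B : Submodule F A) : Set A :=
  {x : A | ∀ b ∈ B, mul x b = 0 ∧ mul b x = 0}

/-- `R` is the radical (the maximal solvable ideal) of the subalgebra `S`. -/
def IsRadicalIn (mul : A →ₗ[F] A →ₗ[F] A) (S R : Submodule F A) : Prop :=
  IsIdealIn mul R S ∧ IsSolvableSub mul R ∧
    ∀ T, IsIdealIn mul T S → IsSolvableSub mul T → T ≤ R

/-- `N` is the nilradical (the maximal nilpotent ideal) of the subalgebra `S`. -/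
def IsNilradicalIn (mul : A →ₗ[F] A →ₗ[F] A) (S N : Submodule F A) : Prop :=
  IsIdealIn mul N S ∧ IsNilpotentSub mul N ∧
    ∀ T, IsIdealIn mul T S → IsNilpotentSub mul T → T ≤ N

/-- `H` is a Cartan subalgebra: a nilpotent self-normalizing subalgebra. -/
def IsCartan (mul : A →ₗ[F] A →ₗ[F] A) (H : Submodule F A) : Prop :=
  IsSubalg mul H ∧ IsNilpotentSub mul H ∧
    ∀ x : A, (∀ h ∈ H, mul x h ∈ H ∧ mul h x ∈ H) → x ∈ H

/-- The subalgebra generated by a set: the smallest subalgebra containing it. -/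
def subalgGen (mul : A →ₗ[F] A →ₗ[F] A) (s : Set A) : Submodule F A :=
  sInf {S : Submodule F A | IsSubalg mul S ∧ s ⊆ (S : Set A)}

end LeibnizDefs

/-! The subspace `B ^ ω` is an ideal of `A`: subinvariance gives `f^n(B, A) ≤ B ^ ω` for some `n`,
and `f(B ^ n, A) ≤ f^n(B, A)` by the Leibniz identity. Likewise for `C`. Put `I = B ^ ω + C ^ ω`
and let `ρ` be the representation of `A` on `A ⧸ I` by left multiplications, so that the spaces
`ρ B` and `ρ C` are nilpotent.

In characteristic zero, the radical of the trace form on an associative algebra of endomorphisms is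
its largest nilpotent ideal, and it is stable under every `⁅a, ·⁆` that preserves the algebra.
Hence, for `S` an ideal of `T`, the radical attached to `ρ S` lies in the radical attached to `ρ T`.
Climbing the chains from `B` and `C` up to `A` shows that `B` and `C` lie in the ideal `N` of all
elements that `ρ` maps into the radical for `ρ A`. Then so does the subalgebra `D` generated by `B`
and `C`. As `ρ N` is nilpotent, some power `N ^ k` lies in `I ≤ D`, and
`D = D + N ^ k ⊴ ⋯ ⊴ D + N ^ 2 ⊴ D + N = N ⊴ A`. -/

theorem mul_pow_le_pow_mul {α : Type*} [Monoid α] [Preorder α] [MulLeftMono α]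
    [MulRightMono α] {E J : α} (hE₁ : 1 ≤ E) (hEE : E * E ≤ E) (hEJ : E * J ≤ J * E)
    (n : ℕ) : (J * E) ^ n ≤ J ^ n * E := by
  induction n with
  | zero => simpa only [pow_zero, one_mul] using hE₁
  | succ n ih =>
    calc (J * E) ^ (n + 1) = (J * E) ^ n * (J * E) := pow_succ _ _
      _ ≤ (J ^ n * E) * (J * E) := by gcongr
      _ = J ^ n * (E * J) * E := by simp only [mul_assoc]
      _ ≤ J ^ n * (J * E) * E := by gcongr
      _ = J ^ (n + 1) * (E * E) := by simp only [pow_succ, mul_assoc]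
      _ ≤ J ^ (n + 1) * E := by gcongr

section SubmoduleProducts

variable {R A M : Type*} [CommSemiring R] [Semiring A] [Algebra R A]

theorem toSubmodule_adjoin_mul_le {s : Set A} {J : Submodule R A}
    (h : ∀ a ∈ s, ∀ j ∈ J, a * j ∈ J * (Algebra.adjoin R s).toSubmodule) :
    (Algebra.adjoin R s).toSubmodule * J ≤ J * (Algebra.adjoin R s).toSubmodule := by
  set E := (Algebra.adjoin R s).toSubmodule
  have hEE : E * E = E := Subalgebra.isIdempotentElem_toSubmodule _
  have hJ : J ≤ J * E := fun j hj => by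
    simpa only [mul_one] using
      Submodule.mul_mem_mul hj (show (1 : A) ∈ E from one_mem (Algebra.adjoin R s))
  suffices hE : ∀ e ∈ Algebra.adjoin R s, ∀ z ∈ J * E, e * z ∈ J * E from
    Submodule.mul_le.2 fun e he j hj => hE e he j (hJ hj)
  intro e he
  induction he using Algebra.adjoin_induction with
  | mem a ha =>
    intro z hz
    induction hz using Submodule.mul_induction_on' with
    | mem_mul_mem j hj e he =>
      rw [← hEE, ← mul_assoc J, ← mul_assoc a]
      exact Submodule.mul_mem_mul (h a ha j hj) he
    | add x _ y _ ihx ihy => rw [mul_add]; exact add_mem ihx ihy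
  | algebraMap r =>
    intro z hz
    rw [← Algebra.smul_def]
    exact Submodule.smul_mem _ r hz
  | add x y _ _ ihx ihy =>
    intro z hz
    rw [add_mul]
    exact add_mem (ihx z hz) (ihy z hz)
  | mul x y _ _ ihx ihy =>
    intro z hz
    rw [mul_assoc]
    exact ihx _ (ihy z hz)

theorem isNilpotent_mul_toSubmodule {E : Subalgebra R A} {J : Submodule R A}
    (hJ : IsNilpotent J) (hEJ : E.toSubmodule * J ≤ J * E.toSubmodule) :
    IsNilpotent (J * E.toSubmodule) := by
  obtain ⟨n, hn⟩ := hJ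
  refine ⟨n, ?_⟩
  have hle := mul_pow_le_pow_mul (Submodule.one_le.2 (one_mem E))
    E.isIdempotentElem_toSubmodule.le hEJ n
  rwa [hn, zero_mul, Submodule.zero_eq_bot, le_bot_iff] at hle

variable [AddCommMonoid M] [Module R M] [Module A M] [IsScalarTower R A M]

theorem pow_smul_le_of_smul_le_succ {S : Submodule R A} {U : ℕ → Submodule R M}
    (hU : ∀ i, S • U i ≤ U (i + 1)) (k : ℕ) : S ^ k • U 0 ≤ U k := by
  induction k with
  | zero => exact (Submodule.one_smul _).le
  | succ k ih =>
    rw [pow_succ', ← smul_eq_mul, Submodule.smul_assoc]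
    exact (Submodule.smul_mono le_rfl ih).trans (hU k)

theorem eq_bot_of_smul_top_le_bot [FaithfulSMul A M] {S : Submodule R A}
    (hS : S • (⊤ : Submodule R M) ≤ ⊥) : S = ⊥ := by
  refine (Submodule.eq_bot_iff S).2 fun x hx => FaithfulSMul.eq_of_smul_eq_smul fun m : M => ?_
  rw [zero_smul]
  exact (Submodule.mem_bot R).1 (hS (Submodule.smul_mem_smul hx Submodule.mem_top))

theorem isNilpotent_of_smul_le_succ [FaithfulSMul A M] {S : Submodule R A}
    {U : ℕ → Submodule R M} (hU₀ : U 0 = ⊤) (hU : ∀ i, S • U i ≤ U (i + 1)) {n : ℕ}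
    (hn : U n = ⊥) : IsNilpotent S :=
  ⟨n, eq_bot_of_smul_top_le_bot (hU₀ ▸ hn ▸ pow_smul_le_of_smul_le_succ hU n)⟩

end SubmoduleProducts

theorem lie_mem_adjoin {R A : Type*} [CommSemiring R] [Ring A] [Algebra R A] {s : Set A} {a : A}
    (h : ∀ b ∈ s, ⁅a, b⁆ ∈ Algebra.adjoin R s) {e : A} (he : e ∈ Algebra.adjoin R s) :
    ⁅a, e⁆ ∈ Algebra.adjoin R s := by
  induction he using Algebra.adjoin_induction with
  | mem b hb => exact h b hb
  | algebraMap r =>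
    rw [Ring.lie_def, Algebra.commutes, sub_self]
    exact zero_mem _
  | add x y _ _ ihx ihy =>
    have hadd : ⁅a, x + y⁆ = ⁅a, x⁆ + ⁅a, y⁆ := by simp only [Ring.lie_def]; noncomm_ring
    rw [hadd]
    exact add_mem ihx ihy
  | mul x y hx hy ihx ihy =>
    have hmul : ⁅a, x * y⁆ = ⁅a, x⁆ * y + x * ⁅a, y⁆ := by simp only [Ring.lie_def]; noncomm_ring
    rw [hmul]
    exact add_mem (mul_mem ihx hy) (mul_mem hx ihy)

section NilpotentEndomorphisms

variable {R M : Type*} [CommRing R] [AddCommGroup M] [Module R M]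

attribute [local instance] LieRing.ofAssociativeRing in
/-- Engel's theorem, applied to `J` with the commutator bracket. -/
theorem isNilpotent_of_forall_isNilpotent [IsNoetherian R M]
    {J : Submodule R (Module.End R M)} (hmul : ∀ x ∈ J, ∀ y ∈ J, x * y ∈ J)
    (hnil : ∀ x ∈ J, IsNilpotent x) : IsNilpotent J := by
  let K : LieSubalgebra R (Module.End R M) :=
    { J with lie_mem' := fun {x y} hx hy => J.sub_mem (hmul x hx y hy) (hmul y hy x hx) }
  have hK : LieModule.IsNilpotent K M :=
    (LieModule.isNilpotent_iff_forall' (R := R)).2 fun x => hnil x x.2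
  obtain ⟨n, hn⟩ := LieModule.IsNilpotent.nilpotent R K M
  refine isNilpotent_of_smul_le_succ
    (U := fun k => (LieModule.lowerCentralSeries R K M k).toSubmodule) rfl (fun k => ?_) (n := n)
    (by rw [hn]; rfl)
  refine Submodule.smul_le.2 fun x hx v hv => ?_
  rw [LieSubmodule.mem_toSubmodule, LieModule.lowerCentralSeries_succ]
  exact LieSubmodule.lie_mem_lie (x := (⟨x, hx⟩ : K)) (LieSubmodule.mem_top _) hv

theorem exists_isIdempotentElem_mul {S : Type*} [CommRing S] [IsArtinianRing S] (x : S) :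
    ∃ (n : ℕ) (y : S), IsIdempotentElem (x * y) ∧ x ^ n * (x * y) = x ^ n := by
  obtain ⟨n, y, hy⟩ := IsArtinian.exists_pow_succ_smul_dvd x (1 : S)
  have hfix : x ^ n * (x * y) = x ^ n := by
    simpa only [smul_eq_mul, mul_one, pow_succ, mul_assoc] using hy
  have hfix_pow (k : ℕ) : x ^ n * (x * y) ^ k = x ^ n := by
    induction k with
    | zero => rw [pow_zero, mul_one]
    | succ k ih => rw [pow_succ, ← mul_assoc, ih, hfix]
  have hpow : x * (y * (x * y) ^ n) = (x * y) ^ (n + 1) := by ring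
  refine ⟨n, y * (x * y) ^ n, ?_, by rw [hpow, hfix_pow]⟩
  rw [hpow]
  calc (x * y) ^ (n + 1) * (x * y) ^ (n + 1)
      = (x ^ n * (x * y) ^ (n + 1)) * (x * y ^ (n + 1)) := by ring
    _ = (x * y) ^ (n + 1) := by rw [hfix_pow]; ring

open scoped IsMulCommutative in
theorem isNilpotent_of_trace_mul_eq_zero {F V : Type*} [Field F] [CharZero F] [AddCommGroup V]
    [Module F V] [FiniteDimensional F V] {x : Module.End F V}
    (hx : ∀ e ∈ Algebra.adjoin F {x}, LinearMap.trace F V (x * e) = 0) : IsNilpotent x := by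
  have : IsArtinianRing (Algebra.adjoin F {x}) := IsArtinianRing.of_finite F _
  have : IsMulCommutative (Algebra.adjoin F {x}) :=
    Algebra.isMulCommutative_adjoin F (by simp only [Set.mem_singleton_iff, forall_eq])
  obtain ⟨n, y, hidem, hfix⟩ := exists_isIdempotentElem_mul
    (⟨x, Algebra.self_mem_adjoin_singleton F x⟩ : Algebra.adjoin F {x})
  have hzero : x * (y : Module.End F V) = 0 :=
    LinearMap.IsIdempotentElem.eq_zero_of_trace_eq_zero (congrArg Subtype.val hidem) (hx y y.2)
  have hfix' : x ^ n * (x * (y : Module.End F V)) = x ^ n := congrArg Subtype.val hfix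
  exact ⟨n, by rw [← hfix', hzero, mul_zero]⟩

end NilpotentEndomorphisms

section TraceRadical

variable {R M : Type*} [CommRing R] [AddCommGroup M] [Module R M]

/-- The radical of the trace form `(x, y) ↦ tr (x * y)` on an algebra `E` of endomorphisms. For
a finite-dimensional space over a field of characteristic zero it is the largest nilpotent ideal
of `E`. -/
def traceRadical (E : Subalgebra R (Module.End R M)) : Submodule R (Module.End R M) where
  carrier := {x | x ∈ E ∧ ∀ e ∈ E, LinearMap.trace R M (x * e) = 0}
  zero_mem' := ⟨zero_mem E, fun e _ => by rw [zero_mul, map_zero]⟩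
  add_mem' := fun ⟨hx, hx'⟩ ⟨hy, hy'⟩ =>
    ⟨add_mem hx hy, fun e he => by rw [add_mul, map_add, hx' e he, hy' e he, add_zero]⟩
  smul_mem' := fun r _ ⟨hx, hx'⟩ =>
    ⟨E.smul_mem hx r, fun e he => by rw [smul_mul_assoc, map_smul, hx' e he, smul_zero]⟩

theorem lie_mem_traceRadical {E : Subalgebra R (Module.End R M)} {a x : Module.End R M}
    (ha : ∀ e ∈ E, ⁅a, e⁆ ∈ E) (hx : x ∈ traceRadical E) : ⁅a, x⁆ ∈ traceRadical E := by
  refine ⟨ha x hx.1, fun e he => ?_⟩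
  have hlie : ⁅a, x⁆ * e = (a * (x * e) - x * e * a) - x * ⁅a, e⁆ := by
    simp only [Ring.lie_def]
    noncomm_ring
  rw [hlie, map_sub, map_sub, LinearMap.trace_mul_comm R a, sub_self, hx.2 _ (ha e he), sub_zero]

theorem le_traceRadical [IsReduced R] {E : Subalgebra R (Module.End R M)}
    {J : Submodule R (Module.End R M)} (hJE : J ≤ E.toSubmodule) (hJ : IsNilpotent J)
    (hEJ : E.toSubmodule * J ≤ J * E.toSubmodule) : J ≤ traceRadical E := by
  refine fun j hj => ⟨hJE hj, fun e he => ?_⟩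
  obtain ⟨n, hn⟩ := isNilpotent_mul_toSubmodule hJ hEJ
  have hje : (j * e) ^ n ∈ (J * E.toSubmodule) ^ n :=
    Submodule.pow_mem_pow _ (Submodule.mul_mem_mul hj he) n
  rw [hn] at hje
  exact (LinearMap.isNilpotent_trace_of_isNilpotent ⟨n, (Submodule.mem_bot R).1 hje⟩).eq_zero

theorem le_traceRadical_adjoin [IsReduced R] {J : Submodule R (Module.End R M)}
    (hJ : IsNilpotent J) : J ≤ traceRadical (Algebra.adjoin R (J : Set (Module.End R M))) :=
  le_traceRadical Algebra.subset_adjoin hJ <| toSubmodule_adjoin_mul_le fun _ ha _ hj =>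
    Submodule.mul_mem_mul ha (Algebra.subset_adjoin hj)

variable {F V : Type*} [Field F] [CharZero F] [AddCommGroup V] [Module F V] [FiniteDimensional F V]

theorem isNilpotent_traceRadical (E : Subalgebra F (Module.End F V)) :
    IsNilpotent (traceRadical E) :=
  isNilpotent_of_forall_isNilpotent
    (fun x hx y hy => ⟨mul_mem hx.1 hy.1, fun e he => by
      rw [mul_assoc]; exact hx.2 _ (mul_mem hy.1 he)⟩)
    (fun _ hx => isNilpotent_of_trace_mul_eq_zero fun e he =>
      hx.2 e (Algebra.adjoin_singleton_le hx.1 he))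

theorem traceRadical_adjoin_mono {s t : Set (Module.End F V)} (hst : s ⊆ t)
    (hlie : ∀ a ∈ t, ∀ b ∈ s, ⁅a, b⁆ ∈ Algebra.adjoin F s) :
    traceRadical (Algebra.adjoin F s) ≤ traceRadical (Algebra.adjoin F t) := by
  refine le_traceRadical (fun x hx => Algebra.adjoin_mono hst hx.1) (isNilpotent_traceRadical _)
    (toSubmodule_adjoin_mul_le fun a ha j hj => ?_)
  have hcomm : a * j = j * a + ⁅a, j⁆ * 1 := by rw [Ring.lie_def]; noncomm_ring
  have hlie_mem : ⁅a, j⁆ ∈ traceRadical (Algebra.adjoin F s) :=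
    lie_mem_traceRadical (fun e he => lie_mem_adjoin (hlie a ha) he) hj
  rw [hcomm]
  exact add_mem (Submodule.mul_mem_mul hj (Algebra.subset_adjoin ha))
    (Submodule.mul_mem_mul hlie_mem (one_mem (Algebra.adjoin F t)))

end TraceRadical

section SubspaceProducts

variable {F A : Type*} [Field F] [AddCommGroup A] [Module F A] {mul : A →ₗ[F] A →ₗ[F] A}
  {B C I J S X Y : Submodule F A}

theorem mulSub_eq_map₂ (mul : A →ₗ[F] A →ₗ[F] A) (B C : Submodule F A) :
    mulSub mul B C = Submodule.map₂ mul B C :=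
  (Submodule.map₂_eq_span_image2 mul B C).symm

theorem mul_mem_mulSub {b c : A} (hb : b ∈ B) (hc : c ∈ C) : mul b c ∈ mulSub mul B C :=
  Submodule.subset_span ⟨b, hb, c, hc, rfl⟩

theorem mulSub_le : mulSub mul B C ≤ X ↔ ∀ b ∈ B, ∀ c ∈ C, mul b c ∈ X := by
  rw [mulSub_eq_map₂, Submodule.map₂_le]

theorem mulSub_mono (hBX : B ≤ X) (hCY : C ≤ Y) : mulSub mul B C ≤ mulSub mul X Y :=
  mulSub_le.2 fun _ hb _ hc => mul_mem_mulSub (hBX hb) (hCY hc)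

theorem fSub_comm (mul : A →ₗ[F] A →ₗ[F] A) (B C : Submodule F A) :
    fSub mul B C = fSub mul C B :=
  sup_comm _ _

theorem fSub_mono (hBX : B ≤ X) (hCY : C ≤ Y) : fSub mul B C ≤ fSub mul X Y :=
  sup_le_sup (mulSub_mono hBX hCY) (mulSub_mono hCY hBX)

theorem fSub_le : fSub mul B C ≤ X ↔ ∀ b ∈ B, ∀ c ∈ C, mul b c ∈ X ∧ mul c b ∈ X := by
  rw [fSub, sup_le_iff, mulSub_le, mulSub_le]
  exact ⟨fun h b hb c hc => ⟨h.1 b hb c hc, h.2 c hc b hb⟩,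
    fun h => ⟨fun b hb c hc => (h b hb c hc).1, fun c hc b hb => (h b hb c hc).2⟩⟩

theorem fSub_sup_right (mul : A →ₗ[F] A →ₗ[F] A) (B C D : Submodule F A) :
    fSub mul B (C ⊔ D) = fSub mul B C ⊔ fSub mul B D := by
  simp only [fSub, mulSub_eq_map₂, Submodule.map₂_sup_left, Submodule.map₂_sup_right]
  exact sup_sup_sup_comm _ _ _ _

theorem fIter_mono_right (hXY : X ≤ Y) : ∀ n, fIter mul B X n ≤ fIter mul B Y n
  | 0 => fSub_mono le_rfl hXY
  | n + 1 => fSub_mono le_rfl (fIter_mono_right hXY n)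

theorem fIter_fSub (mul : A →ₗ[F] A →ₗ[F] A) (B X : Submodule F A) :
    ∀ n, fIter mul B (fSub mul B X) n = fIter mul B X (n + 1)
  | 0 => rfl
  | n + 1 => congrArg (fSub mul B) (fIter_fSub mul B X n)

theorem isIdealIn_iff_fSub_le : IsIdealIn mul I S ↔ I ≤ S ∧ fSub mul S I ≤ I := by
  rw [IsIdealIn, fSub_le]

theorem IsIdealIn.isSubalg (h : IsIdealIn mul I S) : IsSubalg mul I :=
  fun x hx y hy => (h.2 x (h.1 hx) y hy).1

theorem IsIdealIn.sup (hI : IsIdealIn mul I S) (hJ : IsIdealIn mul J S) :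
    IsIdealIn mul (I ⊔ J) S := by
  rw [isIdealIn_iff_fSub_le] at *
  exact ⟨sup_le hI.1 hJ.1, (fSub_sup_right mul S I J).trans_le (sup_le_sup hI.2 hJ.2)⟩

theorem IsSubalg.fSub_le (hB : IsSubalg mul B) : fSub mul B B ≤ B :=
  sup_le (mulSub_le.2 hB) (mulSub_le.2 hB)

theorem isSubalg_top : IsSubalg mul ⊤ := fun _ _ _ _ => Submodule.mem_top

theorem subset_subalgGen (mul : A →ₗ[F] A →ₗ[F] A) (s : Set A) : s ⊆ subalgGen mul s :=
  fun _ hx => Submodule.mem_sInf.2 fun _ hS => hS.2 hx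

theorem isSubalg_subalgGen (mul : A →ₗ[F] A →ₗ[F] A) (s : Set A) :
    IsSubalg mul (subalgGen mul s) := fun x hx y hy =>
  Submodule.mem_sInf.2 fun S hS =>
    hS.1 x (Submodule.mem_sInf.1 hx S hS) y (Submodule.mem_sInf.1 hy S hS)

theorem subalgGen_le {s : Set A} (hS : IsSubalg mul S) (hs : s ⊆ S) : subalgGen mul s ≤ S :=
  sInf_le ⟨hS, hs⟩

theorem lcs_antitone (hB : IsSubalg mul B) : Antitone (lcs mul B) := by
  refine antitone_nat_of_succ_le fun n => ?_
  induction n with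
  | zero => exact mulSub_le.2 hB
  | succ n ih => exact mulSub_mono le_rfl ih

theorem omegaSub_le (mul : A →ₗ[F] A →ₗ[F] A) (B : Submodule F A) : omegaSub mul B ≤ B :=
  iInf_le (lcs mul B) 0

theorem exists_forall_lcs_eq_omegaSub [FiniteDimensional F A] (hB : IsSubalg mul B) :
    ∃ n, ∀ m, n ≤ m → lcs mul B m = omegaSub mul B := by
  obtain ⟨n, hn⟩ := IsArtinian.monotone_stabilizes (R := F) (M := A)
    ⟨fun n => OrderDual.toDual (lcs mul B n), lcs_antitone hB⟩
  replace hn : ∀ m, n ≤ m → lcs mul B n = lcs mul B m := hn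
  have hω : lcs mul B n = omegaSub mul B :=
    le_antisymm (le_iInf fun m => (le_total n m).elim (fun h => (hn m h).le)
      (fun h => lcs_antitone hB h)) (iInf_le _ n)
  exact ⟨n, fun m hm => (hn m hm).symm.trans hω⟩

end SubspaceProducts

section Subinvariant

variable {F A : Type*} [Field F] [AddCommGroup A] [Module F A] {mul : A →ₗ[F] A →ₗ[F] A}
  {B I S T : Submodule F A}

theorem IsSubalg.isSubinvariantIn_self (hS : IsSubalg mul S) : IsSubinvariantIn mul S S :=
  ⟨0, fun _ => S, rfl, rfl, fun _ _ => hS, fun _ hi => absurd hi (Nat.not_lt_zero _)⟩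

theorem IsSubinvariantIn.of_isIdealIn (hS : IsSubinvariantIn mul S T) (hI : IsIdealIn mul I S) :
    IsSubinvariantIn mul I T := by
  obtain ⟨t, c, rfl, hct, hsub, hid⟩ := hS
  refine ⟨t + 1, fun i => Nat.casesOn i I c, rfl, hct, ?_, ?_⟩
  · rintro (_ | i) hi
    · exact hI.isSubalg
    · exact hsub i (Nat.le_of_succ_le_succ hi)
  · rintro (_ | i) hi
    · exact hI
    · exact hid i (Nat.lt_of_succ_lt_succ hi)

theorem IsIdealIn.isSubinvariantIn (hI : IsIdealIn mul I S) (hS : IsSubalg mul S) :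
    IsSubinvariantIn mul I S :=
  hS.isSubinvariantIn_self.of_isIdealIn hI

theorem IsSubinvariantIn.isSubalg (h : IsSubinvariantIn mul B S) : IsSubalg mul B := by
  obtain ⟨t, c, rfl, -, hsub, -⟩ := h
  exact hsub 0 (Nat.zero_le t)

theorem IsSubinvariantIn.induction_on {motive : Submodule F A → Prop}
    (h : IsSubinvariantIn mul B S) (self : motive B)
    (ideal : ∀ I T, B ≤ I → IsIdealIn mul I T → motive I → motive T) : motive S := by
  obtain ⟨t, c, rfl, rfl, -, hid⟩ := h
  suffices hchain : ∀ i ≤ t, c 0 ≤ c i ∧ motive (c i) from (hchain t le_rfl).2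
  intro i
  induction i with
  | zero => exact fun _ => ⟨le_rfl, self⟩
  | succ i ih =>
    intro hi
    obtain ⟨hle, hmot⟩ := ih (Nat.le_of_succ_le hi)
    exact ⟨hle.trans (hid i hi).1, ideal _ _ hle (hid i hi) hmot⟩

theorem IsSubinvariantIn.le (h : IsSubinvariantIn mul B S) : B ≤ S :=
  h.induction_on le_rfl fun _ _ hBI hI _ => hBI.trans hI.1

theorem IsSubinvariantIn.exists_fIter_le (h : IsSubinvariantIn mul B S) :
    ∃ n, fIter mul B S n ≤ B := by
  refine h.induction_on (motive := fun T => ∃ n, fIter mul B T n ≤ B)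
    ⟨0, h.isSubalg.fSub_le⟩ ?_
  rintro I T hBI hI ⟨n, hn⟩
  have hBT : fSub mul B T ≤ I :=
    (fSub_mono hBI le_rfl).trans ((fSub_comm mul I T).trans_le (isIdealIn_iff_fSub_le.1 hI).2)
  exact ⟨n + 1, (fIter_fSub mul B T n).ge.trans ((fIter_mono_right hBT n).trans hn)⟩

end Subinvariant

section Leibniz

variable {F A : Type*} [Field F] [AddCommGroup A] [Module F A] {mul : A →ₗ[F] A →ₗ[F] A}
  {B D N S : Submodule F A}

/-- The left Leibniz identity: each left multiplication `mul x` is a derivation of `mul`. -/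
def IsLeibniz (mul : A →ₗ[F] A →ₗ[F] A) : Prop :=
  ∀ x y z : A, mul x (mul y z) = mul (mul x y) z + mul y (mul x z)

theorem mulSub_mulSub_left_le (hleib : IsLeibniz mul) (X Y Z : Submodule F A) :
    mulSub mul (mulSub mul X Y) Z ≤
      mulSub mul X (mulSub mul Y Z) ⊔ mulSub mul Y (mulSub mul X Z) := by
  refine mulSub_le.2 fun w hw z hz => ?_
  suffices hle : mulSub mul X Y ≤ (mulSub mul X (mulSub mul Y Z) ⊔
      mulSub mul Y (mulSub mul X Z)).comap (mul.flip z) from hle hw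
  refine mulSub_le.2 fun x hx y hy => ?_
  have hxyz : mul (mul x y) z = mul x (mul y z) - mul y (mul x z) :=
    eq_sub_of_add_eq (hleib x y z).symm
  rw [Submodule.mem_comap, LinearMap.flip_apply, hxyz]
  exact sub_mem (Submodule.mem_sup_left (mul_mem_mulSub hx (mul_mem_mulSub hy hz)))
    (Submodule.mem_sup_right (mul_mem_mulSub hy (mul_mem_mulSub hx hz)))

theorem mulSub_mulSub_right_le (hleib : IsLeibniz mul) (X Y Z : Submodule F A) :
    mulSub mul X (mulSub mul Y Z) ≤
      mulSub mul (mulSub mul X Y) Z ⊔ mulSub mul Y (mulSub mul X Z) := by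
  refine mulSub_le.2 fun x hx w hw => ?_
  suffices hle : mulSub mul Y Z ≤ (mulSub mul (mulSub mul X Y) Z ⊔
      mulSub mul Y (mulSub mul X Z)).comap (mul x) from hle hw
  refine mulSub_le.2 fun y hy z hz => ?_
  rw [Submodule.mem_comap, hleib x y z]
  exact Submodule.add_mem_sup (mul_mem_mulSub (mul_mem_mulSub hx hy) hz)
    (mul_mem_mulSub hy (mul_mem_mulSub hx hz))

theorem fSub_mulSub_le (hleib : IsLeibniz mul) (X Y Z : Submodule F A) :
    fSub mul (mulSub mul X Y) Z ≤ fSub mul X (fSub mul Y Z) ⊔ fSub mul Y (fSub mul X Z) := by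
  refine sup_le ((mulSub_mulSub_left_le hleib X Y Z).trans ?_)
    ((mulSub_mulSub_right_le hleib Z X Y).trans ?_)
  · exact sup_le_sup ((mulSub_mono le_rfl le_sup_left).trans le_sup_left)
      ((mulSub_mono le_rfl le_sup_left).trans le_sup_left)
  · rw [sup_comm]
    exact sup_le_sup ((mulSub_mono le_rfl le_sup_right).trans le_sup_left)
      ((mulSub_mono le_sup_right le_rfl).trans le_sup_right)

theorem mulSub_lcs_lcs_le (hleib : IsLeibniz mul) (B : Submodule F A) (j k : ℕ) :
    mulSub mul (lcs mul B j) (lcs mul B k) ≤ lcs mul B (j + k + 1) := by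
  induction j generalizing k with
  | zero => rw [Nat.zero_add]; exact le_rfl
  | succ j ih =>
    refine (mulSub_mulSub_left_le hleib B (lcs mul B j) (lcs mul B k)).trans (sup_le ?_ ?_)
    · rw [Nat.add_right_comm j 1 k]
      exact mulSub_mono le_rfl (ih k)
    · rw [Nat.add_assoc j 1 k, Nat.add_comm 1 k]
      exact ih (k + 1)

theorem fSub_lcs_le (hleib : IsLeibniz mul) (B : Submodule F A) (k : ℕ) :
    fSub mul B (lcs mul B k) ≤ lcs mul B (k + 1) :=
  sup_le le_rfl (mulSub_lcs_lcs_le hleib B k 0)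

theorem fSub_lcs_le_fIter (hleib : IsLeibniz mul) (B X : Submodule F A) (k : ℕ) :
    fSub mul (lcs mul B k) X ≤ fIter mul B X k := by
  induction k generalizing X with
  | zero => exact le_rfl
  | succ k ih =>
    refine (fSub_mulSub_le hleib B (lcs mul B k) X).trans (sup_le ?_ ?_)
    · exact fSub_mono le_rfl (ih X)
    · exact (ih (fSub mul B X)).trans (fIter_fSub mul B X k).le

theorem fIter_add_le_lcs (hleib : IsLeibniz mul) {X : Submodule F A} {n : ℕ}
    (hn : fIter mul B X n ≤ B) : ∀ k, fIter mul B X (n + k) ≤ lcs mul B k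
  | 0 => hn
  | k + 1 => (fSub_mono le_rfl (fIter_add_le_lcs hleib hn k)).trans (fSub_lcs_le hleib B k)

theorem IsSubinvariantIn.exists_fIter_le_omegaSub [FiniteDimensional F A] (hleib : IsLeibniz mul)
    (h : IsSubinvariantIn mul B S) : ∃ n, fIter mul B S n ≤ omegaSub mul B := by
  obtain ⟨n, hn⟩ := h.exists_fIter_le
  obtain ⟨k, hk⟩ := exists_forall_lcs_eq_omegaSub h.isSubalg
  exact ⟨n + k, (fIter_add_le_lcs hleib hn k).trans (hk k le_rfl).le⟩

theorem IsSubinvariantIn.isIdealIn_omegaSub [FiniteDimensional F A] (hleib : IsLeibniz mul)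
    (h : IsSubinvariantIn mul B S) : IsIdealIn mul (omegaSub mul B) S := by
  obtain ⟨n, hn⟩ := h.exists_fIter_le_omegaSub hleib
  refine isIdealIn_iff_fSub_le.2 ⟨(omegaSub_le mul B).trans h.le, ?_⟩
  calc fSub mul S (omegaSub mul B) = fSub mul (omegaSub mul B) S := fSub_comm mul _ _
    _ ≤ fSub mul (lcs mul B n) S := fSub_mono (iInf_le _ n) le_rfl
    _ ≤ fIter mul B S n := fSub_lcs_le_fIter hleib B S n
    _ ≤ omegaSub mul B := hn

theorem isIdealIn_sup_lcs_succ (hleib : IsLeibniz mul) (hN : IsSubalg mul N)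
    (hD : IsSubalg mul D) (hDN : D ≤ N) (k : ℕ) :
    IsIdealIn mul (D ⊔ lcs mul N (k + 1)) (D ⊔ lcs mul N k) := by
  have hlcs_le : lcs mul N (k + 1) ≤ lcs mul N k := lcs_antitone hN k.le_succ
  have hsup_le : D ⊔ lcs mul N k ≤ N := sup_le hDN (lcs_antitone hN k.zero_le)
  refine isIdealIn_iff_fSub_le.2 ⟨sup_le_sup_left hlcs_le D, ?_⟩
  rw [fSub_sup_right, fSub_comm mul _ D, fSub_sup_right]
  refine sup_le (sup_le ?_ ?_) ?_
  · exact hD.fSub_le.trans le_sup_left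
  · exact ((fSub_mono hDN le_rfl).trans (fSub_lcs_le hleib N k)).trans le_sup_right
  · exact ((fSub_mono hsup_le hlcs_le).trans (fSub_lcs_le hleib N k)).trans le_sup_right

theorem IsSubinvariantIn.of_lcs_le (hleib : IsLeibniz mul) (hN : IsSubinvariantIn mul N S)
    (hD : IsSubalg mul D) (hDN : D ≤ N) {k : ℕ} (hk : lcs mul N k ≤ D) :
    IsSubinvariantIn mul D S := by
  suffices hsup : ∀ i, IsSubinvariantIn mul (D ⊔ lcs mul N i) S by
    simpa only [sup_eq_left.2 hk] using hsup k
  intro i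
  induction i with
  | zero => exact (sup_eq_right.2 hDN : D ⊔ lcs mul N 0 = N).symm ▸ hN
  | succ i ih => exact ih.of_isIdealIn (isIdealIn_sup_lcs_succ hleib hN.isSubalg hD hDN i)

end Leibniz

section TraceNilradical

variable {F A V : Type*} [Field F] [AddCommGroup A] [Module F A] [AddCommGroup V] [Module F V]

/-- The elements of `A` that `ρ` maps into the trace radical of the associative algebra generated
by the image of `ρ`. When `ρ` is the representation of a Leibniz algebra by left multiplications,
this is an ideal playing the role of the nilradical. -/
def traceNilradical (ρ : A →ₗ[F] Module.End F V) : Submodule F A :=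
  (traceRadical (Algebra.adjoin F (LinearMap.range ρ : Set (Module.End F V)))).comap ρ

variable {mul : A →ₗ[F] A →ₗ[F] A} {ρ : A →ₗ[F] Module.End F V}

theorem isIdealIn_traceNilradical (hρ : ∀ a b, ρ (mul a b) = ⁅ρ a, ρ b⁆) :
    IsIdealIn mul (traceNilradical ρ) ⊤ := by
  refine ⟨le_top, fun x _ y hy => ?_⟩
  have hρx : ρ x ∈ Algebra.adjoin F (LinearMap.range ρ : Set (Module.End F V)) :=
    Algebra.subset_adjoin ⟨x, rfl⟩
  have hxy : ⁅ρ x, ρ y⁆ ∈ traceRadical _ :=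
    lie_mem_traceRadical (fun e he => sub_mem (mul_mem hρx he) (mul_mem he hρx)) hy
  have hyx : ⁅ρ y, ρ x⁆ = -⁅ρ x, ρ y⁆ := by simp only [Ring.lie_def, neg_sub]
  simp only [traceNilradical, Submodule.mem_comap, hρ, hyx]
  exact ⟨hxy, neg_mem hxy⟩

variable [CharZero F] [FiniteDimensional F V]

theorem isNilpotent_map_traceNilradical (ρ : A →ₗ[F] Module.End F V) :
    IsNilpotent ((traceNilradical ρ).map ρ) := by
  obtain ⟨n, hn⟩ := isNilpotent_traceRadical
    (Algebra.adjoin F (LinearMap.range ρ : Set (Module.End F V)))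
  exact ⟨n, le_bot_iff.1 ((pow_le_pow_left' (Submodule.map_comap_le ρ _) n).trans hn.le)⟩

theorem IsSubinvariantIn.map_le_traceRadical_adjoin {B S : Submodule F A}
    (h : IsSubinvariantIn mul B S) (hρ : ∀ a b, ρ (mul a b) = ⁅ρ a, ρ b⁆)
    (hnil : IsNilpotent (B.map ρ)) :
    B.map ρ ≤ traceRadical (Algebra.adjoin F (S.map ρ : Set (Module.End F V))) := by
  refine h.induction_on (motive := fun T => B.map ρ ≤ traceRadical (Algebra.adjoin F (T.map ρ)))
    (le_traceRadical_adjoin hnil) fun I T _ hI hBI => hBI.trans ?_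
  refine traceRadical_adjoin_mono (Submodule.map_mono hI.1) ?_
  rintro _ ⟨a, ha, rfl⟩ _ ⟨b, hb, rfl⟩
  exact Algebra.subset_adjoin ⟨mul a b, (hI.2 a ha b hb).1, hρ a b⟩

theorem IsSubinvariantIn.le_traceNilradical {B : Submodule F A} (h : IsSubinvariantIn mul B ⊤)
    (hρ : ∀ a b, ρ (mul a b) = ⁅ρ a, ρ b⁆) (hnil : IsNilpotent (B.map ρ)) :
    B ≤ traceNilradical ρ := by
  have hmap := h.map_le_traceRadical_adjoin hρ hnil
  rw [Submodule.map_top] at hmap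
  exact Submodule.map_le_iff_le_comap.1 hmap

end TraceNilradical

section LeftMulQuotient

variable {F A : Type*} [Field F] [AddCommGroup A] [Module F A] {mul : A →ₗ[F] A →ₗ[F] A}
  {I : Submodule F A}

/-- The action of `A` by left multiplications on the quotient by a subspace `I` with `A I ⊆ I`. -/
def leftMulQuotient (mul : A →ₗ[F] A →ₗ[F] A) (I : Submodule F A)
    (hI : ∀ a, I ≤ I.comap (mul a)) : A →ₗ[F] Module.End F (A ⧸ I) :=
  I.mapQLinear I ∘ₗ mul.codRestrict (Submodule.compatibleMaps I I) hI

variable (hI : ∀ a, I ≤ I.comap (mul a))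

theorem leftMulQuotient_mkQ (a b : A) :
    leftMulQuotient mul I hI a (I.mkQ b) = I.mkQ (mul a b) :=
  rfl

theorem leftMulQuotient_mul (hleib : IsLeibniz mul) (a b : A) :
    leftMulQuotient mul I hI (mul a b) =
      ⁅leftMulQuotient mul I hI a, leftMulQuotient mul I hI b⁆ := by
  refine LinearMap.ext fun v => ?_
  obtain ⟨x, rfl⟩ := I.mkQ_surjective v
  simp only [Ring.lie_def, LinearMap.sub_apply, Module.End.mul_apply, leftMulQuotient_mkQ]
  rw [hleib a b x, map_add, add_sub_cancel_right]

theorem map_mkQ_mulSub (B X : Submodule F A) :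
    (mulSub mul B X).map I.mkQ = B.map (leftMulQuotient mul I hI) • X.map I.mkQ := by
  apply le_antisymm
  · refine Submodule.map_le_iff_le_comap.2 (mulSub_le.2 fun b hb x hx => ?_)
    exact Submodule.smul_mem_smul (Submodule.mem_map_of_mem hb) (Submodule.mem_map_of_mem hx)
  · refine Submodule.smul_le.2 ?_
    rintro _ ⟨b, hb, rfl⟩ _ ⟨x, hx, rfl⟩
    exact Submodule.mem_map_of_mem (mul_mem_mulSub hb hx)

theorem isNilpotent_map_leftMulQuotient {B : Submodule F A} {n : ℕ} (hn : fIter mul B ⊤ n ≤ I) :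
    IsNilpotent (B.map (leftMulQuotient mul I hI)) := by
  let U : ℕ → Submodule F A := fun i => Nat.casesOn i ⊤ (fIter mul B ⊤)
  have hU : ∀ i, mulSub mul B (U i) ≤ U (i + 1)
    | 0 => le_sup_left
    | _ + 1 => le_sup_left
  refine isNilpotent_of_smul_le_succ (U := fun i => (U i).map I.mkQ) (n := n + 1)
    ?_ (fun i => ?_) ?_
  · exact (Submodule.map_top _).trans (Submodule.range_mkQ _)
  · rw [← map_mkQ_mulSub hI]
    exact Submodule.map_mono (hU i)
  · rwa [← le_bot_iff, Submodule.map_le_iff_le_comap, ← LinearMap.ker, Submodule.ker_mkQ]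

theorem map_mkQ_lcs_le (N : Submodule F A) (k : ℕ) :
    (lcs mul N k).map I.mkQ ≤ N.map (leftMulQuotient mul I hI) ^ k • ⊤ := by
  induction k with
  | zero => rw [pow_zero, Submodule.one_smul]; exact le_top
  | succ k ih =>
    rw [lcs, map_mkQ_mulSub hI, pow_succ', ← smul_eq_mul, Submodule.smul_assoc]
    exact Submodule.smul_mono le_rfl ih

theorem exists_lcs_le {N : Submodule F A}
    (hN : IsNilpotent (N.map (leftMulQuotient mul I hI))) : ∃ k, lcs mul N k ≤ I := by
  obtain ⟨k, hk⟩ := hN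
  have hle := map_mkQ_lcs_le hI N k
  rw [hk, Submodule.zero_eq_bot, Submodule.bot_smul, Submodule.map_le_iff_le_comap,
    ← LinearMap.ker, Submodule.ker_mkQ] at hle
  exact ⟨k, hle⟩

end LeftMulQuotient

/-- over characteristic zero, the subalgebra generated by two
subinvariant subalgebras is subinvariant. -/
theorem stmt_17 {F A : Type*} [Field F] [CharZero F]
    [AddCommGroup A] [Module F A] [FiniteDimensional F A]
    (mul : A →ₗ[F] A →ₗ[F] A)
    (hleib : ∀ x y z : A, mul x (mul y z) = mul (mul x y) z + mul y (mul x z))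
    (B C : Submodule F A)
    (hB : IsSubinvariantIn mul B ⊤) (hC : IsSubinvariantIn mul C ⊤) :
    IsSubinvariantIn mul (subalgGen mul ((B : Set A) ∪ (C : Set A))) ⊤ := by
  obtain ⟨p, hp⟩ := hB.exists_fIter_le_omegaSub hleib
  obtain ⟨q, hq⟩ := hC.exists_fIter_le_omegaSub hleib
  set D := subalgGen mul ((B : Set A) ∪ (C : Set A))
  set I := omegaSub mul B ⊔ omegaSub mul C
  have hI : IsIdealIn mul I ⊤ := (hB.isIdealIn_omegaSub hleib).sup (hC.isIdealIn_omegaSub hleib)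
  have hI_left : ∀ a, I ≤ I.comap (mul a) := fun a y hy => (hI.2 a trivial y hy).1
  set ρ := leftMulQuotient mul I hI_left
  have hρ : ∀ a b, ρ (mul a b) = ⁅ρ a, ρ b⁆ := leftMulQuotient_mul hI_left hleib
  set N := traceNilradical ρ
  have hN : IsIdealIn mul N ⊤ := isIdealIn_traceNilradical hρ
  have hBN : B ≤ N := hB.le_traceNilradical hρ
    (isNilpotent_map_leftMulQuotient hI_left (hp.trans le_sup_left))
  have hCN : C ≤ N := hC.le_traceNilradical hρ
    (isNilpotent_map_leftMulQuotient hI_left (hq.trans le_sup_right))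
  have hDN : D ≤ N := subalgGen_le hN.isSubalg (Set.union_subset hBN hCN)
  have hID : I ≤ D := sup_le
    ((omegaSub_le mul B).trans (Set.subset_union_left.trans (subset_subalgGen mul _)))
    ((omegaSub_le mul C).trans (Set.subset_union_right.trans (subset_subalgGen mul _)))
  obtain ⟨k, hk⟩ := exists_lcs_le hI_left (isNilpotent_map_traceNilradical ρ)
  exact (hN.isSubinvariantIn isSubalg_top).of_lcs_le hleib (isSubalg_subalgGen mul _) hDN
    (hk.trans hID)
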